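/- Let m ≤ n, let B ∈ ℝ^{m×n} have a full singular value decomposition B = U diag(Σ) Vᵀ, where U ∈ ℝ^{m×m} and V ∈ ℝ^{n×n} are orthogonal and Σ ∈ ℝ^m is the nonincreasing vector of singular values of B. Let λ > 0, β > 0, and let weights w ∈ ℝ^m satisfy 0 < w₁ ≤ w₂ ≤ ⋯ ≤ w_m. Then the matrix X* = U diag(d) Vᵀ, where d_i = max(Σ_i − λ w_i/(2β), 0) for i = 1,…,m, is a global minimizer over ℝ^{m×n} of the function G(X) = (β/2)‖X − B‖_F² + (λ/2) ∑_{i=1}^m w_i σ_i(X). -/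

import Mathlib

open Filter Topology Matrix

/-- The singular values of a real `m × n` matrix (`m ≤ n`), in nonincreasing order:
`sval X i` is the `(i+1)`-th largest singular value of `X`. -/
noncomputable def sval {m n : ℕ} (X : Matrix (Fin m) (Fin n) ℝ) : Fin m → ℝ :=
  fun i =>
    let ev : Fin m → ℝ := (Matrix.isHermitian_mul_conjTranspose_self X).eigenvalues
    Real.sqrt (ev (Tuple.sort ev i.rev))

/-- The `m × n` matrix with the vector `d` on its main diagonal and zeros elsewhere. -/
def rdiag {m n : ℕ} (d : Fin m → ℝ) : Matrix (Fin m) (Fin n) ℝ :=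
  Matrix.of fun i j => if (j : ℕ) = (i : ℕ) then d i else 0

/-- The Frobenius norm of a matrix. -/
noncomputable def frobNorm {m n : ℕ} (X : Matrix (Fin m) (Fin n) ℝ) : ℝ :=
  Real.sqrt (∑ i, ∑ j, (X i j) ^ 2)

/-!
By von Neumann's trace inequality `tr (X Yᵀ) ≤ ∑ σᵢ(X) σᵢ(Y)`, the singular value vectors of two
matrices are no further apart than the matrices themselves (Mirsky). Hence `G(X)` is at least
`∑ (β/2 (σᵢ(X) - Σᵢ)² + λ/2 wᵢ σᵢ(X))`, and each summand is minimized over `σᵢ(X) ≥ 0` by soft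
thresholding. Since `Σ` is nonincreasing and `w` is nondecreasing, the thresholded values are again
nonincreasing, so they are the singular values of `X*` and the lower bound is attained there.

For the trace inequality, write `X = W diag(σ(X)) C` and `Y = W' diag(σ(Y)) C'` with `W`, `W'`
orthogonal and `C`, `C'` contractions. Then `tr (X Yᵀ) = ∑ σᵢ(X) σₖ(Y) Pᵢₖ Qᵢₖ` for the contractions
`P = C C'ᵀ` and `Q = Wᵀ W'`, and `(Pᵢₖ² + Qᵢₖ²) / 2` is a doubly substochastic matrix, to which
Birkhoff's theorem and the rearrangement inequality apply.
-/

section Rearrangement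

theorem monovary_sumElim_zero {ι κ R : Type*} [Zero R] [Preorder R] {s t : ι → R}
    (hs : 0 ≤ s) (ht : 0 ≤ t) (hst : Monovary s t) :
    Monovary (Sum.elim s (0 : κ → R)) (Sum.elim t 0) := by
  rintro (i | i) (k | k) hik
  · exact hst hik
  · exact absurd hik (ht i).not_gt
  · exact hs k
  · exact le_rfl

variable {ι R : Type*} [Fintype ι] [Field R] [LinearOrder R] [IsStrictOrderedRing R]
  {s t : ι → R} {M : Matrix ι ι R}

theorem dotProduct_mulVec_le_of_mem_doublyStochastic [DecidableEq ι] (hst : Monovary s t)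
    (hM : M ∈ doublyStochastic R ι) : s ⬝ᵥ M *ᵥ t ≤ s ⬝ᵥ t := by
  obtain ⟨c, hc_nonneg, hc_sum, rfl⟩ := exists_eq_sum_perm_of_mem_doublyStochastic hM
  calc s ⬝ᵥ (∑ σ, c σ • σ.permMatrix R) *ᵥ t
      = ∑ σ : Equiv.Perm ι, c σ * (s ⬝ᵥ t ∘ σ) := by
        simp only [sum_mulVec, dotProduct_sum, smul_mulVec, dotProduct_smul, permMatrix_mulVec,
          smul_eq_mul]
    _ ≤ ∑ σ, c σ * (s ⬝ᵥ t) :=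
        Finset.sum_le_sum fun σ _ =>
          mul_le_mul_of_nonneg_left hst.sum_mul_comp_perm_le_sum_mul (hc_nonneg σ)
    _ = s ⬝ᵥ t := by rw [← Finset.sum_mul, hc_sum, one_mul]

theorem fromBlocks_mem_doublyStochastic [DecidableEq ι] (hM : ∀ i k, 0 ≤ M i k)
    (hrow : ∀ i, ∑ k, M i k ≤ 1) (hcol : ∀ k, ∑ i, M i k ≤ 1) :
    fromBlocks M (diagonal fun i => 1 - ∑ k, M i k) (diagonal fun k => 1 - ∑ i, M i k) Mᵀ ∈
      doublyStochastic R (ι ⊕ ι) := by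
  have hdiag {d : ι → R} (hd : ∀ i, 0 ≤ d i) (i k : ι) : 0 ≤ diagonal d i k := by
    rw [diagonal_apply]
    split_ifs
    exacts [hd i, le_rfl]
  refine mem_doublyStochastic_iff_sum.2 ⟨?_, ?_, ?_⟩
  · rintro (i | i) (k | k)
    · exact hM i k
    · exact hdiag (fun i => sub_nonneg.2 (hrow i)) i k
    · exact hdiag (fun k => sub_nonneg.2 (hcol k)) i k
    · exact hM k i
  · rintro (i | i) <;> simp [diagonal_apply]
  · rintro (k | k) <;> simp [diagonal_apply]

theorem dotProduct_mulVec_le_of_substochastic (hs : 0 ≤ s) (ht : 0 ≤ t) (hst : Monovary s t)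
    (hM : ∀ i k, 0 ≤ M i k) (hrow : ∀ i, ∑ k, M i k ≤ 1) (hcol : ∀ k, ∑ i, M i k ≤ 1) :
    s ⬝ᵥ M *ᵥ t ≤ s ⬝ᵥ t := by
  classical
  simpa [fromBlocks_mulVec, sumElim_dotProduct_sumElim] using
    dotProduct_mulVec_le_of_mem_doublyStochastic (monovary_sumElim_zero hs ht hst)
      (fromBlocks_mem_doublyStochastic hM hrow hcol)

end Rearrangement

section Contraction

open scoped Matrix.Norms.L2Operator

variable {ι κ : Type*} [Fintype ι] [Fintype κ] [DecidableEq κ]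

theorem l2_opNorm_transpose [DecidableEq ι] (A : Matrix ι κ ℝ) : ‖Aᵀ‖ = ‖A‖ := by
  rw [← conjTranspose_eq_transpose_of_trivial, l2_opNorm_conjTranspose]

theorem l2_opNorm_le_one_of_mul_transpose_eq_diagonal [DecidableEq ι] {A : Matrix ι κ ℝ} {d : ι → ℝ}
    (hA : A * Aᵀ = diagonal d) (hd : ‖d‖ ≤ 1) : ‖A‖ ≤ 1 := by
  have hnorm : ‖A‖ * ‖A‖ = ‖d‖ := by
    rw [← l2_opNorm_transpose, ← l2_opNorm_conjTranspose_mul_self,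
      conjTranspose_eq_transpose_of_trivial, transpose_transpose, hA, l2_opNorm_diagonal]
  exact abs_le_one_iff_mul_self_le_one.2 (hnorm.trans_le hd) |> (le_abs_self _).trans

theorem l2_opNorm_le_one_of_mem_orthogonalGroup {W : Matrix κ κ ℝ}
    (hW : W ∈ orthogonalGroup κ ℝ) : ‖W‖ ≤ 1 :=
  l2_opNorm_le_one_of_mul_transpose_eq_diagonal (d := fun _ => 1)
    ((mem_orthogonalGroup_iff κ ℝ).1 hW |>.trans diagonal_one.symm)
    ((pi_norm_const_le 1).trans_eq norm_one)

theorem sum_sq_col_le_one {A : Matrix ι κ ℝ} (hA : ‖A‖ ≤ 1) (k : κ) : ∑ i, A i k ^ 2 ≤ 1 := by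
  have hcol : ‖WithLp.toLp 2 (A.col k)‖ ≤ 1 := by
    simpa using (l2_opNorm_mulVec A (EuclideanSpace.single k 1)).trans (by simpa using hA)
  simpa [EuclideanSpace.norm_sq_eq] using pow_le_one₀ (n := 2) (norm_nonneg _) hcol

theorem sum_sq_row_le_one {A : Matrix ι κ ℝ} (hA : ‖A‖ ≤ 1) (i : ι) : ∑ k, A i k ^ 2 ≤ 1 := by
  classical
  exact sum_sq_col_le_one ((l2_opNorm_transpose A).trans_le hA) i

theorem dotProduct_hadamard_mulVec_le {s t : κ → ℝ} (hs : 0 ≤ s) (ht : 0 ≤ t)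
    (hst : Monovary s t) {P Q : Matrix κ κ ℝ} (hP : ‖P‖ ≤ 1) (hQ : ‖Q‖ ≤ 1) :
    s ⬝ᵥ (P ⊙ Q) *ᵥ t ≤ s ⬝ᵥ t := by
  let M : Matrix κ κ ℝ := of fun i k => (P i k ^ 2 + Q i k ^ 2) / 2
  have hPQ (i k : κ) : (P ⊙ Q) i k ≤ M i k := by
    simp only [hadamard_apply, M, of_apply]
    linarith [two_mul_le_add_sq (P i k) (Q i k)]
  have hrow (i : κ) : ∑ k, M i k ≤ 1 := by
    simp only [M, of_apply, ← Finset.sum_div, Finset.sum_add_distrib]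
    linarith [sum_sq_row_le_one hP i, sum_sq_row_le_one hQ i]
  have hcol (k : κ) : ∑ i, M i k ≤ 1 := by
    simp only [M, of_apply, ← Finset.sum_div, Finset.sum_add_distrib]
    linarith [sum_sq_col_le_one hP k, sum_sq_col_le_one hQ k]
  calc s ⬝ᵥ (P ⊙ Q) *ᵥ t ≤ s ⬝ᵥ M *ᵥ t :=
        dotProduct_le_dotProduct_of_nonneg_left
          (fun i => dotProduct_le_dotProduct_of_nonneg_right (hPQ i) ht) hs
    _ ≤ s ⬝ᵥ t :=
        dotProduct_mulVec_le_of_substochastic hs ht hst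
          (fun i k => by simp only [M, of_apply]; positivity) hrow hcol

theorem exists_contraction_eq_diagonal_mul [DecidableEq ι] {Y : Matrix ι κ ℝ} {s : ι → ℝ}
    (hY : Y * Yᵀ = diagonal fun i => s i ^ 2) :
    ∃ C : Matrix ι κ ℝ, ‖C‖ ≤ 1 ∧ Y = diagonal s * C := by
  refine ⟨diagonal (fun i => (s i)⁻¹) * Y, ?_, ?_⟩
  · refine l2_opNorm_le_one_of_mul_transpose_eq_diagonal
      (d := fun i => (s i)⁻¹ * s i ^ 2 * (s i)⁻¹) ?_ ?_
    · rw [transpose_mul, diagonal_transpose, Matrix.mul_assoc, ← Matrix.mul_assoc Y, hY,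
        diagonal_mul_diagonal, diagonal_mul_diagonal]
      simp only [mul_assoc]
    · refine (pi_norm_le_iff_of_nonneg zero_le_one).2 fun i => ?_
      rcases eq_or_ne (s i) 0 with hi | hi
      · simp [hi]
      · rw [show (s i)⁻¹ * s i ^ 2 * (s i)⁻¹ = 1 by field_simp, norm_one]
  · have hrow (i : ι) (hi : s i = 0) : Y i = 0 := by
      have hii : Y i ⬝ᵥ Y i = s i ^ 2 := by
        rw [← diagonal_apply_eq (fun i => s i ^ 2), ← hY]
        rfl
      exact dotProduct_self_eq_zero.1 (by rw [hii, hi, zero_pow two_ne_zero])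
    ext i j
    rcases eq_or_ne (s i) 0 with hi | hi
    · simp [hi, hrow i hi]
    · simp [hi]

end Contraction

section SingularValues

open scoped Matrix.Norms.L2Operator

variable {m n : ℕ}

theorem eq_of_antitone_of_map_univ_val_eq {α : Type*} [PartialOrder α] {f g : Fin m → α}
    (hf : Antitone f) (hg : Antitone g)
    (hfg : Finset.univ.val.map f = Finset.univ.val.map g) : f = g := by
  rw [Fin.univ_val_map, Fin.univ_val_map, Multiset.coe_eq_coe] at hfg
  exact List.ofFn_injective
    (hfg.eq_of_pairwise' hf.sortedGE_ofFn.pairwise hg.sortedGE_ofFn.pairwise)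

theorem sval_nonneg (X : Matrix (Fin m) (Fin n) ℝ) : 0 ≤ sval X :=
  fun _ => Real.sqrt_nonneg _

theorem exists_perm_sval_eq (X : Matrix (Fin m) (Fin n) ℝ) :
    ∃ τ : Equiv.Perm (Fin m),
      ∀ i, sval X i = √((isHermitian_mul_conjTranspose_self X).eigenvalues (τ i)) :=
  ⟨Fin.revPerm.trans (Tuple.sort _), fun _ => rfl⟩

theorem sval_antitone (X : Matrix (Fin m) (Fin n) ℝ) : Antitone (sval X) := fun _ _ hij =>
  Real.sqrt_le_sqrt <| Tuple.monotone_sort (isHermitian_mul_conjTranspose_self X).eigenvalues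
    (Fin.rev_le_rev.2 hij)

theorem exists_orthogonal_conj_mul_transpose_eq_diagonal_sval_sq (X : Matrix (Fin m) (Fin n) ℝ) :
    ∃ W ∈ orthogonalGroup (Fin m) ℝ,
      Wᵀ * (X * Xᵀ) * W = diagonal fun i => sval X i ^ 2 := by
  obtain ⟨τ, hτ⟩ := exists_perm_sval_eq X
  set hX := isHermitian_mul_conjTranspose_self X
  let E : Matrix (Fin m) (Fin m) ℝ := hX.eigenvectorUnitary
  have hE : Eᵀ * E = 1 := Unitary.coe_star_mul_self hX.eigenvectorUnitary
  have hdiag : Eᵀ * (X * Xᵀ) * E = diagonal hX.eigenvalues := by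
    have hconj := hX.conjStarAlgAut_star_eigenvectorUnitary
    rw [Unitary.conjStarAlgAut_star_apply] at hconj
    exact hconj
  have hsq (i : Fin m) : sval X i ^ 2 = hX.eigenvalues (τ i) := by
    rw [hτ, Real.sq_sqrt ((posSemidef_self_mul_conjTranspose X).eigenvalues_nonneg _)]
  refine ⟨E.submatrix id τ, (mem_orthogonalGroup_iff' _ _).2 ?_, ?_⟩
  · have hsub : (E.submatrix id τ)ᵀ * E.submatrix id τ = (Eᵀ * E).submatrix τ τ := rfl
    rw [hsub, hE, submatrix_one_equiv]
  · have hsub : (E.submatrix id τ)ᵀ * (X * Xᵀ) * E.submatrix id τ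
        = (Eᵀ * (X * Xᵀ) * E).submatrix τ τ := rfl
    rw [hsub, hdiag, submatrix_diagonal_equiv]
    simp only [hsq, Function.comp_def]

theorem exists_eq_orthogonal_mul_diagonal_sval_mul_contraction (X : Matrix (Fin m) (Fin n) ℝ) :
    ∃ W ∈ orthogonalGroup (Fin m) ℝ, ∃ C : Matrix (Fin m) (Fin n) ℝ,
      ‖C‖ ≤ 1 ∧ X = W * diagonal (sval X) * C := by
  obtain ⟨W, hW, hdiag⟩ := exists_orthogonal_conj_mul_transpose_eq_diagonal_sval_sq X
  have hgram : (Wᵀ * X) * (Wᵀ * X)ᵀ = diagonal fun i => sval X i ^ 2 := by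
    rw [← hdiag, transpose_mul, transpose_transpose]
    simp only [Matrix.mul_assoc]
  obtain ⟨C, hC, hWX⟩ := exists_contraction_eq_diagonal_mul hgram
  refine ⟨W, hW, C, hC, ?_⟩
  rw [Matrix.mul_assoc, ← hWX, ← Matrix.mul_assoc, (mem_orthogonalGroup_iff _ _).1 hW,
    Matrix.one_mul]

theorem trace_mul_transpose_le_sum_sval_mul_sval (X Y : Matrix (Fin m) (Fin n) ℝ) :
    (X * Yᵀ).trace ≤ ∑ i, sval X i * sval Y i := by
  obtain ⟨W, hW, C, hC, hX⟩ := exists_eq_orthogonal_mul_diagonal_sval_mul_contraction X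
  obtain ⟨W', hW', C', hC', hY⟩ := exists_eq_orthogonal_mul_diagonal_sval_mul_contraction Y
  have hP : ‖C * C'ᵀ‖ ≤ 1 := (l2_opNorm_mul _ _).trans
    (mul_le_one₀ hC (norm_nonneg _) ((l2_opNorm_transpose C').trans_le hC'))
  have hQ : ‖Wᵀ * W'‖ ≤ 1 :=
    l2_opNorm_le_one_of_mem_orthogonalGroup (mul_mem (Unitary.star_mem hW) hW')
  calc (X * Yᵀ).trace
      = (diagonal (sval X) * (C * C'ᵀ) * (Wᵀ * W' * diagonal (sval Y))ᵀ).trace := by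
        conv_lhs => rw [hX, hY, Matrix.mul_assoc W, Matrix.mul_assoc W, Matrix.trace_mul_comm W]
        simp only [transpose_mul, transpose_transpose, diagonal_transpose, Matrix.mul_assoc]
    _ = sval X ⬝ᵥ ((C * C'ᵀ) ⊙ (Wᵀ * W')) *ᵥ sval Y := by
        rw [dotProduct_mulVec, dotProduct_vecMul_hadamard]
    _ ≤ ∑ i, sval X i * sval Y i :=
        dotProduct_hadamard_mulVec_le (sval_nonneg X) (sval_nonneg Y)
          ((sval_antitone X).monovary (sval_antitone Y)) hP hQ

theorem map_sval_univ_val (X : Matrix (Fin m) (Fin n) ℝ) :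
    Finset.univ.val.map (sval X) = (X * Xᵀ).charpoly.roots.map Real.sqrt := by
  obtain ⟨τ, hτ⟩ := exists_perm_sval_eq X
  set hX := isHermitian_mul_conjTranspose_self X
  have hroots : (X * Xᵀ).charpoly.roots = Finset.univ.val.map hX.eigenvalues :=
    hX.roots_charpoly_eq_eigenvalues
  calc Finset.univ.val.map (sval X)
      = (Finset.univ.val.map τ).map fun i => √(hX.eigenvalues i) := by
        simp only [Multiset.map_map, Function.comp_def, ← hτ]
    _ = (X * Xᵀ).charpoly.roots.map Real.sqrt := by
        rw [Multiset.map_univ_val_equiv, hroots, Multiset.map_map]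
        rfl

theorem sval_eq_of_mul_transpose_eq {X : Matrix (Fin m) (Fin n) ℝ} {U : Matrix (Fin m) (Fin m) ℝ}
    {d : Fin m → ℝ} (hU : Uᵀ * U = 1) (hd_nonneg : 0 ≤ d) (hd_anti : Antitone d)
    (hX : X * Xᵀ = U * diagonal (fun i => d i ^ 2) * Uᵀ) : sval X = d := by
  have hcharpoly : (X * Xᵀ).charpoly = (diagonal fun i => d i ^ 2).charpoly := by
    rw [hX, charpoly_mul_comm, ← Matrix.mul_assoc, hU, Matrix.one_mul]
  have hroots : (X * Xᵀ).charpoly.roots = Finset.univ.val.map fun i => d i ^ 2 := by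
    rw [hcharpoly, charpoly_diagonal]
    simpa only [Finset.prod, Multiset.map_map, Function.comp_def] using
      Polynomial.roots_multiset_prod_X_sub_C (Finset.univ.val.map fun i => d i ^ 2)
  refine eq_of_antitone_of_map_univ_val_eq (sval_antitone X) hd_anti ?_
  rw [map_sval_univ_val, hroots, Multiset.map_map]
  exact Multiset.map_congr rfl fun i _ => Real.sqrt_sq (hd_nonneg i)

theorem frobNorm_sq (X : Matrix (Fin m) (Fin n) ℝ) : frobNorm X ^ 2 = (X * Xᵀ).trace := by
  rw [frobNorm, Real.sq_sqrt (by positivity)]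
  simp [Matrix.trace, Matrix.mul_apply, sq]

theorem frobNorm_sq_eq_sum_sval_sq (X : Matrix (Fin m) (Fin n) ℝ) :
    frobNorm X ^ 2 = ∑ i, sval X i ^ 2 := by
  obtain ⟨W, hW, hdiag⟩ := exists_orthogonal_conj_mul_transpose_eq_diagonal_sval_sq X
  rw [frobNorm_sq, ← trace_diagonal, ← hdiag, trace_mul_comm _ W, ← Matrix.mul_assoc,
    (mem_orthogonalGroup_iff _ _).1 hW, Matrix.one_mul]

theorem frobNorm_sub_sq (X Y : Matrix (Fin m) (Fin n) ℝ) :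
    frobNorm (X - Y) ^ 2 = frobNorm X ^ 2 - 2 * (X * Yᵀ).trace + frobNorm Y ^ 2 := by
  have hsymm : (Y * Xᵀ).trace = (X * Yᵀ).trace := by
    rw [← trace_transpose, transpose_mul, transpose_transpose]
  simp only [frobNorm_sq, transpose_sub, Matrix.sub_mul, Matrix.mul_sub, trace_sub, hsymm]
  ring

theorem sum_sval_sub_sval_sq_le (X Y : Matrix (Fin m) (Fin n) ℝ) :
    ∑ i, (sval X i - sval Y i) ^ 2 ≤ frobNorm (X - Y) ^ 2 := by
  rw [frobNorm_sub_sq, frobNorm_sq_eq_sum_sval_sq, frobNorm_sq_eq_sum_sval_sq]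
  simp only [sub_sq, Finset.sum_add_distrib, Finset.sum_sub_distrib, mul_assoc, ← Finset.mul_sum]
  linarith [trace_mul_transpose_le_sum_sval_mul_sval X Y]

end SingularValues

section OfSVD

variable {m n : ℕ}

/-- The matrix `U diag(d) Vᵀ` assembled from the factors of a full singular value decomposition.
The type ascription makes both products those of `Matrix`: without it the number of columns of
`rdiag d` is not yet known when the multiplication is elaborated. -/
def ofSVD (U : Matrix (Fin m) (Fin m) ℝ) (d : Fin m → ℝ) (V : Matrix (Fin n) (Fin n) ℝ) :
    Matrix (Fin m) (Fin n) ℝ :=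
  U * (rdiag d : Matrix (Fin m) (Fin n) ℝ) * Vᵀ

theorem rdiag_sub (d e : Fin m → ℝ) :
    (rdiag (d - e) : Matrix (Fin m) (Fin n) ℝ) = rdiag d - rdiag e := by
  ext i j
  simp only [rdiag, Matrix.sub_apply, of_apply, Pi.sub_apply]
  split_ifs
  exacts [rfl, (sub_zero 0).symm]

theorem rdiag_mul_transpose (hmn : m ≤ n) (d e : Fin m → ℝ) :
    (rdiag d : Matrix (Fin m) (Fin n) ℝ) * (rdiag e : Matrix (Fin m) (Fin n) ℝ)ᵀ =
      diagonal (d * e) := by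
  have hval (j : Fin n) (i : Fin m) : (j : ℕ) = i ↔ j = Fin.castLE hmn i := by simp [Fin.ext_iff]
  ext i k
  rcases eq_or_ne i k with rfl | hik
  · simp [mul_apply, rdiag, hval]
  · simp [mul_apply, rdiag, hval, hik, hik.symm]

theorem ofSVD_sub (U : Matrix (Fin m) (Fin m) ℝ) (d e : Fin m → ℝ)
    (V : Matrix (Fin n) (Fin n) ℝ) : ofSVD U (d - e) V = ofSVD U d V - ofSVD U e V := by
  simp only [ofSVD, rdiag_sub, Matrix.mul_sub, Matrix.sub_mul]

variable {U : Matrix (Fin m) (Fin m) ℝ} {V : Matrix (Fin n) (Fin n) ℝ}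

theorem ofSVD_mul_transpose_self (hmn : m ≤ n) (hV : Vᵀ * V = 1) (d : Fin m → ℝ) :
    ofSVD U d V * (ofSVD U d V)ᵀ = U * diagonal (fun i => d i ^ 2) * Uᵀ := by
  calc ofSVD U d V * (ofSVD U d V)ᵀ
      = U * ((rdiag d : Matrix (Fin m) (Fin n) ℝ) * (Vᵀ * V) *
          (rdiag d : Matrix (Fin m) (Fin n) ℝ)ᵀ) * Uᵀ := by
        simp only [ofSVD, transpose_mul, transpose_transpose, Matrix.mul_assoc]
    _ = U * diagonal (fun i => d i ^ 2) * Uᵀ := by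
        rw [hV, Matrix.mul_one, rdiag_mul_transpose hmn, ← sq]
        rfl

theorem sval_ofSVD (hmn : m ≤ n) (hU : Uᵀ * U = 1) (hV : Vᵀ * V = 1) {d : Fin m → ℝ}
    (hd_nonneg : 0 ≤ d) (hd_anti : Antitone d) : sval (ofSVD U d V) = d :=
  sval_eq_of_mul_transpose_eq hU hd_nonneg hd_anti (ofSVD_mul_transpose_self hmn hV d)

theorem frobNorm_ofSVD_sq (hmn : m ≤ n) (hU : Uᵀ * U = 1) (hV : Vᵀ * V = 1) (d : Fin m → ℝ) :
    frobNorm (ofSVD U d V) ^ 2 = ∑ i, d i ^ 2 := by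
  rw [frobNorm_sq, ofSVD_mul_transpose_self hmn hV, trace_mul_comm, ← Matrix.mul_assoc, hU,
    Matrix.one_mul, trace_diagonal]

end OfSVD

section SoftThreshold

theorem softThreshold_minimizes (a c : ℝ) {x : ℝ} (hx : 0 ≤ x) :
    (max (a - c) 0 - a) ^ 2 + 2 * c * max (a - c) 0 ≤ (x - a) ^ 2 + 2 * c * x := by
  rcases le_total (a - c) 0 with h | h
  · rw [max_eq_right h]
    nlinarith [mul_nonneg hx (sub_nonneg.2 h)]
  · rw [max_eq_left h]
    nlinarith [sq_nonneg (x - (a - c))]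

theorem weighted_softThreshold_minimizes {β : ℝ} (hβ : 0 < β) (lam a v : ℝ) {x : ℝ} (hx : 0 ≤ x) :
    β / 2 * (max (a - lam * v / (2 * β)) 0 - a) ^ 2
        + lam / 2 * (v * max (a - lam * v / (2 * β)) 0)
      ≤ β / 2 * (x - a) ^ 2 + lam / 2 * (v * x) := by
  have hpenalty (y : ℝ) : lam / 2 * (v * y) = β / 2 * (2 * (lam * v / (2 * β)) * y) := by
    field_simp
  rw [hpenalty, hpenalty, ← mul_add, ← mul_add]
  exact mul_le_mul_of_nonneg_left (softThreshold_minimizes a _ hx) (by positivity)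

end SoftThreshold

theorem stmt_0_general {m n : ℕ} (hmn : m ≤ n) (B : Matrix (Fin m) (Fin n) ℝ)
    (U : Matrix (Fin m) (Fin m) ℝ) (V : Matrix (Fin n) (Fin n) ℝ)
    (hU : Uᵀ * U = 1) (hV : Vᵀ * V = 1)
    (Sv : Fin m → ℝ) (hSv : Sv = sval B) (hB : B = ofSVD U Sv V)
    (lam β : ℝ) (hlam : 0 ≤ lam) (hβ : 0 < β) (w : Fin m → ℝ) (hwmono : Monotone w)
    (X : Matrix (Fin m) (Fin n) ℝ) :
    β / 2 * frobNorm (ofSVD U (fun i => max (Sv i - lam * w i / (2 * β)) 0) V - B) ^ 2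
        + lam / 2 * ∑ i, w i *
            sval (ofSVD U (fun i => max (Sv i - lam * w i / (2 * β)) 0) V) i
      ≤ β / 2 * frobNorm (X - B) ^ 2 + lam / 2 * ∑ i, w i * sval X i := by
  set d : Fin m → ℝ := fun i => max (Sv i - lam * w i / (2 * β)) 0
  have hd_anti : Antitone d := fun i j hij =>
    max_le_max_right 0 (sub_le_sub (hSv ▸ sval_antitone B hij) (by gcongr; exact hwmono hij))
  have hsval : sval (ofSVD U d V) = d :=
    sval_ofSVD hmn hU hV (fun _ => le_max_right _ _) hd_anti
  have hdist : frobNorm (ofSVD U d V - B) ^ 2 = ∑ i, (d i - Sv i) ^ 2 := by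
    rw [hB, ← ofSVD_sub, frobNorm_ofSVD_sq hmn hU hV]
    rfl
  calc β / 2 * frobNorm (ofSVD U d V - B) ^ 2
        + lam / 2 * ∑ i, w i * sval (ofSVD U d V) i
      = ∑ i, (β / 2 * (d i - Sv i) ^ 2 + lam / 2 * (w i * d i)) := by
        rw [hsval, hdist, Finset.sum_add_distrib, Finset.mul_sum, Finset.mul_sum]
    _ ≤ ∑ i, (β / 2 * (sval X i - Sv i) ^ 2 + lam / 2 * (w i * sval X i)) :=
        Finset.sum_le_sum fun i _ => weighted_softThreshold_minimizes hβ _ _ _ (sval_nonneg X i)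
    _ = β / 2 * ∑ i, (sval X i - sval B i) ^ 2 + lam / 2 * ∑ i, w i * sval X i := by
        rw [hSv, Finset.sum_add_distrib, Finset.mul_sum, Finset.mul_sum]
    _ ≤ β / 2 * frobNorm (X - B) ^ 2 + lam / 2 * ∑ i, w i * sval X i := by
        gcongr
        exact sum_sval_sub_sval_sq_le X B

/-- Closed-form global minimizer of the weighted nuclear norm proximal
subproblem: given a full SVD `B = U diag(Σ) Vᵀ` with nonincreasing singular values `Σ`,
and weights in ascending order `0 < w₁ ≤ ⋯ ≤ w_m`, the matrix
`X* = U diag([Σᵢ − λwᵢ/(2β)]₊) Vᵀ` globally minimizes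
`G(X) = (β/2)‖X − B‖_F² + (λ/2) ∑ᵢ wᵢ σᵢ(X)`. -/
theorem stmt_0 {m n : ℕ} (hmn : m ≤ n)
    (B : Matrix (Fin m) (Fin n) ℝ)
    (U : Matrix (Fin m) (Fin m) ℝ) (V : Matrix (Fin n) (Fin n) ℝ)
    (hU : Uᵀ * U = 1) (hU' : U * Uᵀ = 1)
    (hV : Vᵀ * V = 1) (hV' : V * Vᵀ = 1)
    (Sv : Fin m → ℝ) (hSv : Sv = sval B)
    (hB : B = U * rdiag Sv * Vᵀ)
    (lam β : ℝ) (hlam : 0 < lam) (hβ : 0 < β)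
    (w : Fin m → ℝ) (hw0 : ∀ i, 0 < w i) (hwmono : Monotone w) :
    ∀ X : Matrix (Fin m) (Fin n) ℝ,
      β / 2 * frobNorm (U * rdiag (fun i => max (Sv i - lam * w i / (2 * β)) 0) * Vᵀ - B) ^ 2
        + lam / 2 * ∑ i, w i *
            sval (U * rdiag (fun i => max (Sv i - lam * w i / (2 * β)) 0) * Vᵀ) i
      ≤ β / 2 * frobNorm (X - B) ^ 2 + lam / 2 * ∑ i, w i * sval X i :=
  stmt_0_general hmn B U V hU hV Sv hSv hB lam β hlam.le hβ w hwmono
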